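/- arXiv:2603.22098 — 4 statements merged into one kernel-verified Lean document; each statement's English description precedes it below -/
import Mathlib

section
/- For every finite family S of nonempty compact subsets of ℝ², each of which is contained in [0,1]² after some translation, let OPT_t(S) denote the minimum number m of unit bins admitting a translational packing of S (an assignment of each set to one of m bins together with a translation vector such that each translate is contained in [0,1]² and translates assigned to the same bin have pairwise disjoint interiors), and let OPT_r(S) denote the analogous minimum when each set may first be rotated by a multiple of 90° about the origin and then translated. Then OPT_r(S) ≤ OPT_t(S) ≤ 4·OPT_r(S). -/
/-- Translate a set in the plane by a vector. -/
def planeTranslate (v : ℝ × ℝ) (S : Set (ℝ × ℝ)) : Set (ℝ × ℝ) := (· + v) '' S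

/-- The unit bin `[0,1]²`. -/
def unitBin : Set (ℝ × ℝ) := Set.Icc ((0, 0) : ℝ × ℝ) (1, 1)

/-- Rotation by 90 degrees about the origin. -/
def rot90 (p : ℝ × ℝ) : ℝ × ℝ := (-p.2, p.1)

/-- A translational packing of the family `S` into `m` unit bins: every item gets a bin index
`< m` and a translation vector, the translates lie in the bin, and translates sharing a bin
have pairwise disjoint interiors. -/
def PacksT {n : ℕ} (S : Fin n → Set (ℝ × ℝ)) (m : ℕ) : Prop :=
  ∃ (bin : Fin n → ℕ) (v : Fin n → ℝ × ℝ),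
    (∀ i, bin i < m) ∧
    (∀ i, planeTranslate (v i) (S i) ⊆ unitBin) ∧
    ∀ i j, i ≠ j → bin i = bin j →
      Disjoint (interior (planeTranslate (v i) (S i))) (interior (planeTranslate (v j) (S j)))

/-- A packing of the family `S` into `m` unit bins where each item may first be rotated by a
multiple of 90 degrees about the origin and then translated. -/
def PacksR {n : ℕ} (S : Fin n → Set (ℝ × ℝ)) (m : ℕ) : Prop :=
  ∃ (bin : Fin n → ℕ) (rot : Fin n → ℕ) (v : Fin n → ℝ × ℝ),
    (∀ i, bin i < m) ∧
    (∀ i, planeTranslate (v i) (rot90^[rot i] '' S i) ⊆ unitBin) ∧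
    ∀ i j, i ≠ j → bin i = bin j →
      Disjoint (interior (planeTranslate (v i) (rot90^[rot i] '' S i)))
               (interior (planeTranslate (v j) (rot90^[rot j] '' S j)))

/-- Minimum number of bins for a translational packing. -/
noncomputable def OPTt {n : ℕ} (S : Fin n → Set (ℝ × ℝ)) : ℕ := sInf {m | PacksT S m}

/-- Minimum number of bins for a packing with rotations by multiples of 90 degrees. -/
noncomputable def OPTr {n : ℕ} (S : Fin n → Set (ℝ × ℝ)) : ℕ := sInf {m | PacksR S m}

/-!
For the second inequality, split every bin of an optimal rotational packing into four, according
to the rotation of the items modulo 360°. All items in one of the new bins were rotated by the same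
angle, and rotating the whole bin back about its centre maps the bin to itself, preserves
disjointness of interiors, and turns every item into a translate of its original.
-/

section Homeomorph

variable {X Y : Type*} [TopologicalSpace X] [TopologicalSpace Y]

theorem isHomeomorph_iterate {f : X → X} (hf : IsHomeomorph f) (k : ℕ) : IsHomeomorph f^[k] := by
  induction k with
  | zero => exact .id
  | succ k ih => exact ih.comp hf

theorem disjoint_interior_image_iff {f : X → Y} (hf : IsHomeomorph f) {A B : Set X} :
    Disjoint (interior (f '' A)) (interior (f '' B)) ↔ Disjoint (interior A) (interior B) := by
  rw [← hf.image_interior, ← hf.image_interior, Set.disjoint_image_iff hf.injective]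

end Homeomorph

theorem rot90_iterate_eq_id {k : ℕ} (hk : 4 ∣ k) : rot90^[k] = id := by
  obtain ⟨l, rfl⟩ := hk
  have rot90_iterate_four : rot90^[4] = id := by
    funext p
    simp [rot90]
  rw [Function.iterate_mul, rot90_iterate_four, Function.iterate_id]

/-- Rotation by 90 degrees about the centre `(1/2, 1/2)` of the unit bin, the symmetry of the bin
used to undo the rotations of the items packed in it. -/
def binRot : (ℝ × ℝ) ≃ₜ (ℝ × ℝ) where
  toFun p := (1 - p.2, p.1)
  invFun p := (p.2, 1 - p.1)
  left_inv p := by simp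
  right_inv p := by simp
  continuous_toFun := by fun_prop
  continuous_invFun := by fun_prop

theorem binRot_apply (p : ℝ × ℝ) : binRot p = (1 - p.2, p.1) := rfl

theorem mapsTo_binRot_unitBin : Set.MapsTo binRot unitBin unitBin := by
  rintro ⟨x, y⟩ ⟨⟨hx₀, hy₀⟩, hx₁, hy₁⟩
  exact ⟨⟨sub_nonneg.2 hy₁, hx₀⟩, sub_le_self 1 hy₀, hx₁⟩

theorem binRot_add (p v : ℝ × ℝ) : binRot (p + v) = rot90 p + binRot v := by
  ext
  · simp only [binRot_apply, rot90, Prod.fst_add, Prod.snd_add]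
    ring
  · rfl

theorem binRot_image_planeTranslate (v : ℝ × ℝ) (A : Set (ℝ × ℝ)) :
    binRot '' planeTranslate v A = planeTranslate (binRot v) (rot90 '' A) := by
  simp only [planeTranslate, Set.image_image, binRot_add]

theorem binRot_iterate_image_planeTranslate (k : ℕ) (v : ℝ × ℝ) (A : Set (ℝ × ℝ)) :
    binRot^[k] '' planeTranslate v A = planeTranslate (binRot^[k] v) (rot90^[k] '' A) := by
  induction k with
  | zero => simp only [Function.iterate_zero, Set.image_id, id]
  | succ k ih =>
    rw [Function.iterate_succ', Set.image_comp, ih, binRot_image_planeTranslate,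
      Function.iterate_succ', Set.image_comp, Function.comp_apply]

theorem binRot_iterate_image_planeTranslate_rot90 {k r : ℕ} (h : 4 ∣ k + r) (v : ℝ × ℝ)
    (A : Set (ℝ × ℝ)) :
    binRot^[k] '' planeTranslate v (rot90^[r] '' A) = planeTranslate (binRot^[k] v) A := by
  rw [binRot_iterate_image_planeTranslate, ← Set.image_comp, ← Function.iterate_add,
    rot90_iterate_eq_id h, Set.image_id]

section Packing

variable {n m : ℕ} {S : Fin n → Set (ℝ × ℝ)}

theorem PacksT.packsR (h : PacksT S m) : PacksR S m := by
  obtain ⟨bin, v, hbin, hfit, hdisj⟩ := h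
  exact ⟨bin, fun _ => 0, v, hbin, by simpa using hfit, by simpa using hdisj⟩

theorem PacksR.packsT_four_mul (h : PacksR S m) : PacksT S (4 * m) := by
  obtain ⟨bin, rot, v, hbin, hfit, hdisj⟩ := h
  -- As `rot90` has order 4, undoing `r` quarter turns amounts to `3 * r` further ones.
  let back : Fin n → ℕ := fun i => 3 * (rot i % 4)
  have image_item (i : Fin n) : binRot^[back i] '' planeTranslate (v i) (rot90^[rot i] '' S i) =
      planeTranslate (binRot^[back i] (v i)) (S i) :=
    binRot_iterate_image_planeTranslate_rot90 (by grind) _ _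
  refine ⟨fun i => 4 * bin i + rot i % 4, fun i => binRot^[back i] (v i),
    fun i => ?_, fun i => ?_, fun i j hij hsame => ?_⟩
  · grind
  · rw [← image_item]
    exact ((mapsTo_binRot_unitBin.iterate _).mono_left (hfit i)).image_subset
  · have same_bin : bin i = bin j := by grind
    have same_back : back i = back j := by grind
    rw [← image_item, ← image_item, same_back,
      disjoint_interior_image_iff (isHomeomorph_iterate binRot.isHomeomorph _)]
    exact hdisj i j hij same_bin

theorem packsT_card (hfit : ∀ i, ∃ v : ℝ × ℝ, planeTranslate v (S i) ⊆ unitBin) :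
    PacksT S n := by
  choose v hv using hfit
  exact ⟨fun i => i, v, fun i => i.isLt, hv, fun i j hij hsame => absurd (Fin.ext hsame) hij⟩

theorem PacksT.packsT_OPTt (h : PacksT S m) : PacksT S (OPTt S) :=
  Nat.sInf_mem (s := {m | PacksT S m}) ⟨m, h⟩

theorem PacksR.packsR_OPTr (h : PacksR S m) : PacksR S (OPTr S) :=
  Nat.sInf_mem (s := {m | PacksR S m}) ⟨m, h⟩

theorem PacksT.OPTt_le (h : PacksT S m) : OPTt S ≤ m := Nat.sInf_le h

theorem PacksR.OPTr_le (h : PacksR S m) : OPTr S ≤ m := Nat.sInf_le h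

end Packing

theorem stmt0_general (n : ℕ) (S : Fin n → Set (ℝ × ℝ))
    (hfit : ∀ i, ∃ v : ℝ × ℝ, planeTranslate v (S i) ⊆ unitBin) :
    OPTr S ≤ OPTt S ∧ OPTt S ≤ 4 * OPTr S := by
  have hT : PacksT S n := packsT_card hfit
  exact ⟨hT.packsT_OPTt.packsR.OPTr_le, hT.packsR.packsR_OPTr.packsT_four_mul.OPTt_le⟩

/-- for every finite family of nonempty compact planar sets, each of which fits
into the unit bin after some translation, `OPT_r ≤ OPT_t ≤ 4 · OPT_r`. -/
theorem stmt0 (n : ℕ) (S : Fin n → Set (ℝ × ℝ))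
    (hne : ∀ i, (S i).Nonempty) (hcpt : ∀ i, IsCompact (S i))
    (hfit : ∀ i, ∃ v : ℝ × ℝ, planeTranslate v (S i) ⊆ unitBin) :
    OPTr S ≤ OPTt S ∧ OPTt S ≤ 4 * OPTr S :=
  stmt0_general n S hfit
end

section
/- For every integer k ≥ 1, every deterministic online algorithm for BinSorting[k], and every integer n ≥ 1, there exists a sequence of n distinct numbers from {1, …, 2^n − 1} on which the algorithm uses at least ⌈n / ⌊log₂(k+1)⌋⌉ arrays; moreover, any n distinct natural numbers admit a valid offline assignment using only ⌈n/k⌉ arrays. In particular, for k = n every deterministic online algorithm for BinSorting[n] uses at least n/⌊log₂(n+1)⌋ arrays on some sequence of n distinct numbers whose offline optimum is one array. -/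
/-- A valid BinSorting[k] assignment of the numbers `σ` : each number gets an (array, slot)
pair with slot in `{1,…,k}`, no (array, slot) pair is used twice, and within each array the
assigned numbers are strictly increasing in the slot index. -/
def ValidAssign (k : ℕ) {n : ℕ} (σ : Fin n → ℕ) (f : Fin n → ℕ × ℕ) : Prop :=
  (∀ i, 1 ≤ (f i).2 ∧ (f i).2 ≤ k) ∧
  Function.Injective f ∧
  ∀ i j, (f i).1 = (f j).1 → (f i).2 < (f j).2 → σ i < σ j

/-- The assignment induced by a deterministic online algorithm `A` on the sequence `σ`:
the decision for the `i`-th number depends only on the first `i+1` numbers. -/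
def inducedAssign (A : List ℕ → ℕ × ℕ) {n : ℕ} (σ : Fin n → ℕ) : Fin n → ℕ × ℕ :=
  fun i => A ((List.ofFn σ).take (i.1 + 1))

/-- The number of arrays used by an assignment. -/
def arraysUsed {n : ℕ} (f : Fin n → ℕ × ℕ) : ℕ :=
  ((Finset.univ : Finset (Fin n)).image fun i => (f i).1).card

/-- `A` is a deterministic online algorithm for BinSorting[k]: on every finite sequence of
distinct natural numbers the overall assignment it produces is valid (hence it is valid at
every step, by restriction to prefixes). -/
def IsOnlineBinSorting (k : ℕ) (A : List ℕ → ℕ × ℕ) : Prop :=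
  ∀ (n : ℕ) (σ : Fin n → ℕ), Function.Injective σ → ValidAssign k σ (inducedAssign A σ)

/-!
Lower bound: the adversary plays binary search, always presenting the midpoint `x` of its current
open interval, initially `(0, 2 ^ n)`. Suppose `x` goes to slot `s` of array `j`. From then on,
array `j` can take numbers below `x` only in slots below `s`, and numbers above `x` only in slots
above `s`. If `F` slots of array `j` were available before, one of these two sides has at most
`(F - 1) / 2` of them; the adversary continues in the corresponding half of its interval. So each
number put into an array at least halves the array's value of `F + 1`, which starts at `k + 1`.
Hence no array receives more than `log₂ (k + 1)` numbers.

Upper bound: sort the numbers and cut the sorted sequence into blocks of length `k`.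
-/

section Assignments

variable {k n : ℕ} {σ : Fin n → ℕ} {f : Fin n → ℕ × ℕ}

theorem ValidAssign.comp_injective (hf : ValidAssign k σ f) {m : ℕ} {e : Fin m → Fin n}
    (he : Function.Injective e) : ValidAssign k (σ ∘ e) (f ∘ e) :=
  ⟨fun i => hf.1 (e i), hf.2.1.comp he, fun i j => hf.2.2 (e i) (e j)⟩

theorem ValidAssign.slot_lt_slot (hf : ValidAssign k σ f) {i j : Fin n}
    (harray : (f i).1 = (f j).1) (hlt : σ i < σ j) : (f i).2 < (f j).2 := by
  obtain ⟨-, hinj, hmono⟩ := hf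
  by_contra! hle
  rcases hle.eq_or_lt with heq | hgt
  · exact hlt.ne (congrArg σ (hinj (Prod.ext harray heq.symm)))
  · exact hlt.asymm (hmono j i harray.symm hgt)

/-- The number of elements that the assignment `f` puts into array `j`. -/
def arrayLoad (f : Fin n → ℕ × ℕ) (j : ℕ) : ℕ :=
  (Finset.univ.filter fun i => (f i).1 = j).card

theorem le_mul_arraysUsed_of_arrayLoad_le {b : ℕ} (hb : ∀ j, arrayLoad f j ≤ b) :
    n ≤ b * arraysUsed f := by
  simpa [arraysUsed] using
    Finset.card_le_mul_card_image (s := Finset.univ) (f := fun i => (f i).1) b fun j _ => hb j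

theorem arraysUsed_pos (hn : 0 < n) (f : Fin n → ℕ × ℕ) : 0 < arraysUsed f :=
  Finset.card_pos.2 ⟨_, Finset.mem_image_of_mem _ (Finset.mem_univ ⟨0, hn⟩)⟩

end Assignments

section Residual

variable {k n : ℕ} {A : List ℕ → ℕ × ℕ} {x : ℕ}

theorem inducedAssign_cons_zero (A : List ℕ → ℕ × ℕ) (x : ℕ) (σ : Fin n → ℕ) :
    inducedAssign A (Fin.cons x σ : Fin (n + 1) → ℕ) 0 = A [x] := by
  simp [inducedAssign, List.ofFn_succ]

theorem inducedAssign_cons_succ (A : List ℕ → ℕ × ℕ) (x : ℕ) (σ : Fin n → ℕ) (i : Fin n) :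
    inducedAssign A (Fin.cons x σ : Fin (n + 1) → ℕ) i.succ =
      inducedAssign (fun l => A (x :: l)) σ i := by
  simp [inducedAssign, List.ofFn_succ]

theorem arrayLoad_inducedAssign_cons (A : List ℕ → ℕ × ℕ) (x : ℕ) (σ : Fin n → ℕ) (j : ℕ) :
    arrayLoad (inducedAssign A (Fin.cons x σ : Fin (n + 1) → ℕ)) j =
      (if (A [x]).1 = j then 1 else 0) +
        arrayLoad (inducedAssign (fun l => A (x :: l)) σ) j := by
  simp only [arrayLoad, Fin.card_filter_univ_succ, inducedAssign_cons_zero,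
    inducedAssign_cons_succ]
  split_ifs <;> omega

/-- `A` is an online algorithm on the sequences of distinct numbers from `I`, and on these it only
uses the slots in `F j` of each array `j`. This describes what remains of an algorithm for
BinSorting[k] after some numbers have been presented: `I` is the adversary's current interval and
`F j` contains the slots of array `j` that are still available to numbers from `I`. -/
def IsOnlineWithin (k : ℕ) (I : Set ℕ) (F : ℕ → Finset ℕ) (A : List ℕ → ℕ × ℕ) : Prop :=
  ∀ (n : ℕ) (σ : Fin n → ℕ), Function.Injective σ → (∀ i, σ i ∈ I) →
    ValidAssign k σ (inducedAssign A σ) ∧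
      ∀ i, (inducedAssign A σ i).2 ∈ F (inducedAssign A σ i).1

theorem IsOnlineBinSorting.isOnlineWithin (hA : IsOnlineBinSorting k A) (I : Set ℕ) :
    IsOnlineWithin k I (fun _ => Finset.Icc 1 k) A :=
  fun n σ hσ _ => ⟨hA n σ hσ, fun i => Finset.mem_Icc.2 ((hA n σ hσ).1 i)⟩

variable {I : Set ℕ} {F : ℕ → Finset ℕ}

theorem IsOnlineWithin.mono (hA : IsOnlineWithin k I F A) {J : Set ℕ} (hJ : J ⊆ I) :
    IsOnlineWithin k J F A :=
  fun n σ hσ hmem => hA n σ hσ fun i => hJ (hmem i)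

theorem IsOnlineWithin.slot_mem (hA : IsOnlineWithin k I F A) (hx : x ∈ I) :
    (A [x]).2 ∈ F (A [x]).1 := by
  simpa [inducedAssign] using
    (hA 1 (fun _ => x) (Function.injective_of_subsingleton _) fun _ => hx).2 0

-- Stated for a relation `r` so as to cover both `<` and `>`.
theorem IsOnlineWithin.cons (hA : IsOnlineWithin k I F A) (hx : x ∈ I)
    (r : ℕ → ℕ → Prop) [DecidableRel r] [Std.Irrefl r]
    (hr : ∀ {n : ℕ} {σ : Fin n → ℕ} {f : Fin n → ℕ × ℕ}, ValidAssign k σ f →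
      ∀ {i j}, (f i).1 = (f j).1 → r (σ i) (σ j) → r (f i).2 (f j).2) :
    IsOnlineWithin k {y ∈ I | r y x}
      (Function.update F (A [x]).1 {s ∈ F (A [x]).1 | r s (A [x]).2})
      (fun l => A (x :: l)) := by
  intro n σ hσ hmem
  have hcons : Function.Injective (Fin.cons x σ : Fin (n + 1) → ℕ) := by
    refine Fin.cons_injective_iff.2 ⟨?_, hσ⟩
    rintro ⟨i, rfl⟩
    exact irrefl_of r _ (hmem i).2
  obtain ⟨hvalid, hslot⟩ := hA (n + 1) (Fin.cons x σ) hcons (Fin.cases hx fun i => (hmem i).1)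
  refine ⟨?_, fun i => ?_⟩
  · simpa only [Function.comp_def, Fin.cons_succ, inducedAssign_cons_succ] using
      hvalid.comp_injective (Fin.succ_injective n)
  · have hF := hslot i.succ
    have hside := hr hvalid (i := i.succ) (j := 0)
    simp only [inducedAssign_cons_succ, inducedAssign_cons_zero, Fin.cons_succ,
      Fin.cons_zero] at hF hside
    by_cases harray : (inducedAssign (fun l => A (x :: l)) σ i).1 = (A [x]).1
    · rw [harray] at hF
      rw [harray, Function.update_self, Finset.mem_filter]
      exact ⟨hF, hside harray (hmem i).2⟩
    · rwa [Function.update_of_ne harray]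

theorem two_pow_arrayLoad_cons_le {σ : Fin n → ℕ} {G : Finset ℕ}
    (hG : 2 * (G.card + 1) ≤ (F (A [x]).1).card + 1)
    (hload : ∀ j, 2 ^ arrayLoad (inducedAssign (fun l => A (x :: l)) σ) j ≤
      (Function.update F (A [x]).1 G j).card + 1) (j : ℕ) :
    2 ^ arrayLoad (inducedAssign A (Fin.cons x σ : Fin (n + 1) → ℕ)) j ≤ (F j).card + 1 := by
  have hj := hload j
  rw [arrayLoad_inducedAssign_cons]
  split_ifs with harray
  · subst harray
    rw [Function.update_self] at hj
    rw [add_comm, pow_succ']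
    omega
  · rwa [zero_add, ← Function.update_of_ne (Ne.symm harray) G F]

end Residual

section Adversary

theorem card_filter_lt_add_card_filter_gt {α : Type*} [LinearOrder α] {S : Finset α} {s : α}
    (hs : s ∈ S) : {t ∈ S | t < s}.card + {t ∈ S | t > s}.card + 1 = S.card := by
  have hge : {t ∈ S | ¬ t < s} = insert s {t ∈ S | t > s} := by grind
  rw [← Finset.card_filter_add_card_filter_not (s := S) (· < s), hge,
    Finset.card_insert_of_notMem (by simp), add_assoc]

theorem IsOnlineWithin.exists_cons_halving {k x : ℕ} {I : Set ℕ} {F : ℕ → Finset ℕ}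
    {A : List ℕ → ℕ × ℕ} (hA : IsOnlineWithin k I F A) (hx : x ∈ I) :
    ∃ G : Finset ℕ, 2 * (G.card + 1) ≤ (F (A [x]).1).card + 1 ∧
      (IsOnlineWithin k {y ∈ I | y < x} (Function.update F (A [x]).1 G) (fun l => A (x :: l)) ∨
        IsOnlineWithin k {y ∈ I | y > x} (Function.update F (A [x]).1 G)
          (fun l => A (x :: l))) := by
  have hcard := card_filter_lt_add_card_filter_gt (hA.slot_mem hx)
  rcases le_total {t ∈ F (A [x]).1 | t < (A [x]).2}.card
    {t ∈ F (A [x]).1 | t > (A [x]).2}.card with hle | hle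
  · exact ⟨_, by omega, Or.inl (hA.cons hx (· < ·) ValidAssign.slot_lt_slot)⟩
  · exact ⟨_, by omega, Or.inr (hA.cons hx (· > ·) fun hf _ _ harray =>
      hf.slot_lt_slot harray.symm)⟩

theorem IsOnlineWithin.exists_two_pow_arrayLoad_le {k m a : ℕ} {F : ℕ → Finset ℕ}
    {A : List ℕ → ℕ × ℕ} (hA : IsOnlineWithin k (Set.Ioo a (a + 2 ^ m)) F A) :
    ∃ σ : Fin m → ℕ, Function.Injective σ ∧ (∀ i, σ i ∈ Set.Ioo a (a + 2 ^ m)) ∧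
      ∀ j, 2 ^ arrayLoad (inducedAssign A σ) j ≤ (F j).card + 1 := by
  induction m generalizing a F A with
  | zero => exact ⟨Fin.elim0, fun i => i.elim0, fun i => i.elim0, by simp [arrayLoad]⟩
  | succ m ih =>
    have hpow : 0 < 2 ^ m := by positivity
    rw [pow_succ', two_mul, ← add_assoc] at hA ⊢
    set x := a + 2 ^ m
    have hx : x ∈ Set.Ioo a (x + 2 ^ m) := ⟨by omega, by omega⟩
    obtain ⟨G, hG, hhalf⟩ := hA.exists_cons_halving hx
    obtain ⟨b, hsub, hB⟩ : ∃ b, Set.Ioo b (b + 2 ^ m) ⊆ Set.Ioo a (x + 2 ^ m) \ {x} ∧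
        IsOnlineWithin k (Set.Ioo b (b + 2 ^ m)) (Function.update F (A [x]).1 G)
          fun l => A (x :: l) := by
      rcases hhalf with hleft | hright
      · exact ⟨a, by grind, hleft.mono (by grind)⟩
      · exact ⟨x, by grind, hright.mono (by grind)⟩
    obtain ⟨σ, hσ, hmem, hload⟩ := ih hB
    have hxσ : x ∉ Set.range σ := by
      rintro ⟨i, hi⟩
      exact (hsub (hmem i)).2 hi
    exact ⟨Fin.cons x σ, Fin.cons_injective_iff.2 ⟨hxσ, hσ⟩,
      Fin.cases hx fun i => (hsub (hmem i)).1, two_pow_arrayLoad_cons_le hG hload⟩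

theorem IsOnlineBinSorting.exists_le_log_mul_arraysUsed {k : ℕ} {A : List ℕ → ℕ × ℕ}
    (hA : IsOnlineBinSorting k A) (n : ℕ) :
    ∃ σ : Fin n → ℕ, Function.Injective σ ∧ (∀ i, 1 ≤ σ i ∧ σ i ≤ 2 ^ n - 1) ∧
      n ≤ Nat.log 2 (k + 1) * arraysUsed (inducedAssign A σ) := by
  obtain ⟨σ, hσ, hmem, hload⟩ :=
    (hA.isOnlineWithin (Set.Ioo 0 (0 + 2 ^ n))).exists_two_pow_arrayLoad_le
  refine ⟨σ, hσ, fun i => ?_, le_mul_arraysUsed_of_arrayLoad_le fun j => ?_⟩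
  · have := hmem i
    rw [zero_add, Set.mem_Ioo] at this
    omega
  · exact Nat.le_log_of_pow_le one_lt_two (by simpa using hload j)

end Adversary

section Offline

variable {k n : ℕ} {σ : Fin n → ℕ}

/-- The assignment that fills the arrays one after the other in the order of the ranks `r i`, which
are counted from `0`. -/
def blockAssign (k : ℕ) (r : Fin n → ℕ) (i : Fin n) : ℕ × ℕ :=
  (r i / k, r i % k + 1)

theorem validAssign_blockAssign (hk : 0 < k) {r : Fin n → ℕ} (hr : Function.Injective r)
    (hlt : ∀ i j, r i < r j → σ i < σ j) : ValidAssign k σ (blockAssign k r) := by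
  refine ⟨fun i => ⟨Nat.le_add_left _ _, Nat.mod_lt _ hk⟩, fun i j hij => hr ?_,
    fun i j harray hslot => hlt i j ?_⟩
  · obtain ⟨hdiv, hmod⟩ := Prod.mk.inj hij
    rw [← Nat.div_add_mod (r i) k, hdiv, Nat.succ.inj hmod, Nat.div_add_mod]
  · simp only [blockAssign] at harray hslot
    rw [← Nat.div_add_mod (r i) k, ← Nat.div_add_mod (r j) k, harray]
    omega

theorem arraysUsed_blockAssign_le (hk : 0 < k) {r : Fin n → ℕ} {N : ℕ} (hr : ∀ i, r i < N) :
    arraysUsed (blockAssign k r) ≤ N ⌈/⌉ k := by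
  have hsub : (Finset.univ.image fun i => (blockAssign k r i).1) ⊆ Finset.range (N ⌈/⌉ k) := by
    refine Finset.image_subset_iff.2 fun i _ => Finset.mem_range.2 ?_
    rw [blockAssign, Nat.div_lt_iff_lt_mul hk, mul_comm]
    exact (hr i).trans_le (le_smul_ceilDiv hk)
  simpa [arraysUsed] using Finset.card_le_card hsub

theorem exists_validAssign_arraysUsed_le (hk : 0 < k) (hσ : Function.Injective σ) :
    ∃ f : Fin n → ℕ × ℕ, ValidAssign k σ f ∧ arraysUsed f ≤ n ⌈/⌉ k := by
  have hsorted : StrictMono (σ ∘ Tuple.sort σ) :=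
    (Tuple.monotone_sort σ).strictMono_of_injective (hσ.comp (Tuple.sort σ).injective)
  let rank (i : Fin n) : ℕ := (Tuple.sort σ).symm i
  have hrank : Function.Injective rank := Fin.val_injective.comp (Tuple.sort σ).symm.injective
  have hlt (i j : Fin n) (hij : rank i < rank j) : σ i < σ j := by
    simpa using hsorted (Fin.lt_def.2 hij)
  exact ⟨blockAssign k rank, validAssign_blockAssign hk hrank hlt,
    arraysUsed_blockAssign_le hk fun i => ((Tuple.sort σ).symm i).isLt⟩

end Offline

/-- every deterministic online algorithm for BinSorting[k] can be forced, by a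
sequence of `n` distinct numbers from `{1,…,2^n − 1}`, to use at least
`⌈n / ⌊log₂(k+1)⌋⌉` arrays, while any `n` distinct numbers can be offline-assigned to
`⌈n/k⌉` arrays; in particular, for `k = n` the algorithm uses at least `n / ⌊log₂(n+1)⌋`
arrays on a sequence whose offline optimum is one array. -/
theorem stmt1 (k : ℕ) (hk : 1 ≤ k) (A : List ℕ → ℕ × ℕ) (hA : IsOnlineBinSorting k A)
    (n : ℕ) (hn : 1 ≤ n) :
    (∃ σ : Fin n → ℕ, Function.Injective σ ∧
      (∀ i, 1 ≤ σ i ∧ σ i ≤ 2 ^ n - 1) ∧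
      (n + Nat.log 2 (k + 1) - 1) / Nat.log 2 (k + 1) ≤ arraysUsed (inducedAssign A σ)) ∧
    (∀ σ : Fin n → ℕ, Function.Injective σ →
      ∃ f : Fin n → ℕ × ℕ, ValidAssign k σ f ∧ arraysUsed f ≤ (n + k - 1) / k) ∧
    (k = n → ∃ σ : Fin n → ℕ, Function.Injective σ ∧
      (∀ i, 1 ≤ σ i ∧ σ i ≤ 2 ^ n - 1) ∧
      (n : ℝ) / (Nat.log 2 (n + 1) : ℝ) ≤ (arraysUsed (inducedAssign A σ) : ℝ) ∧
      ∃ f : Fin n → ℕ × ℕ, ValidAssign k σ f ∧ arraysUsed f = 1) := by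
  have hlog : 0 < Nat.log 2 (k + 1) := Nat.log_pos one_lt_two (by omega)
  obtain ⟨σ, hσ, hmem, hcard⟩ := hA.exists_le_log_mul_arraysUsed n
  simp only [← Nat.ceilDiv_eq_add_pred_div]
  refine ⟨⟨σ, hσ, hmem, (ceilDiv_le_iff_le_mul hlog).2 hcard⟩,
    fun τ hτ => exists_validAssign_arraysUsed_le hk hτ, ?_⟩
  rintro rfl
  obtain ⟨f, hf, hle⟩ := exists_validAssign_arraysUsed_le hk hσ
  have hone : k ⌈/⌉ k ≤ 1 := (ceilDiv_le_iff_le_mul hk).2 (mul_one k).ge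
  refine ⟨σ, hσ, hmem, ?_, f, hf, le_antisymm (hle.trans hone) (arraysUsed_pos hn f)⟩
  rw [div_le_iff₀' (by exact_mod_cast hlog)]
  exact_mod_cast hcard
end

section
/- For every integer k ≥ 1 there exists a deterministic online algorithm for BinSorting[k] that, on every finite sequence of n distinct natural numbers, uses at most ⌈n / ⌊log₂(k+1)⌋⌉ arrays. (The offline optimum for n distinct numbers is ⌈n/k⌉ arrays, so this algorithm has absolute competitive ratio ⌈n/⌊log₂(k+1)⌋⌉ / ⌈n/k⌉ ∈ O(k/log k).) -/
section ComparisonSlot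

variable {α : Type*} [Preorder α] [DecidableLE α]

/-- The slot, among `1, …, 2 ^ h - 1`, of a number `x` that arrives after the numbers of a list
(oldest first) in an array with room for `h` numbers: the binary digits `[y ≤ x]` for the earlier
numbers `y`, followed by `1` and zeros. The value `0` occurs only when the list leaves no room. -/
def comparisonSlot : ℕ → List α → α → ℕ
  | 0, _, _ => 0
  | h + 1, [], _ => 2 ^ h
  | h + 1, y :: ys, x => (if y ≤ x then 2 ^ h else 0) + comparisonSlot h ys x

lemma comparisonSlot_lt_two_pow (h : ℕ) (p : List α) (x : α) : comparisonSlot h p x < 2 ^ h := by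
  induction h generalizing p with
  | zero => simp [comparisonSlot]
  | succ h ih =>
    cases p with
    | nil => simp [comparisonSlot, pow_succ]
    | cons y ys =>
      have tail_lt := ih ys
      simp only [comparisonSlot, pow_succ]
      split_ifs <;> omega

lemma comparisonSlot_pos {h : ℕ} {p : List α} (hp : p.length < h) (x : α) :
    0 < comparisonSlot h p x := by
  induction p generalizing h with
  | nil =>
    obtain ⟨h, rfl⟩ := Nat.exists_eq_add_of_lt hp
    simp [comparisonSlot]
  | cons y ys ih =>
    cases h with
    | zero => simp at hp
    | succ h => exact Nat.add_pos_right _ (ih (by simpa using hp))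

lemma monotone_ite_le {β : Type*} [Preorder β] {a b : β} (hab : a ≤ b) (y : α) :
    Monotone fun x : α => if y ≤ x then b else a := by
  intro x z hxz
  dsimp only
  split_ifs with hyx hyz
  · exact le_rfl
  · exact absurd (hyx.trans hxz) hyz
  · exact hab
  · exact le_rfl

lemma comparisonSlot_lt_comparisonSlot_append {h : ℕ} {p r : List α} {x z : α}
    (hlen : (p ++ x :: r).length < h) (hxz : x ≤ z) :
    comparisonSlot h p x < comparisonSlot h (p ++ x :: r) z := by
  induction p generalizing h with
  | nil =>
    cases h with
    | zero => simp at hlen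
    | succ h =>
      have tail_pos : 0 < comparisonSlot h r z := comparisonSlot_pos (by simpa using hlen) z
      simpa [comparisonSlot, hxz] using tail_pos
  | cons y ys ih =>
    cases h with
    | zero => simp at hlen
    | succ h =>
      have digit_le := monotone_ite_le (Nat.zero_le (2 ^ h)) y hxz
      exact add_lt_add_of_le_of_lt digit_le (ih (by simpa using hlen))

lemma comparisonSlot_append_lt_comparisonSlot {h : ℕ} {p r : List α} {x z : α}
    (hlen : p.length < h) (hzx : z < x) :
    comparisonSlot h (p ++ x :: r) z < comparisonSlot h p x := by
  induction p generalizing h with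
  | nil =>
    cases h with
    | zero => simp at hlen
    | succ h => simpa [comparisonSlot, hzx.not_ge] using comparisonSlot_lt_two_pow h r z
  | cons y ys ih =>
    cases h with
    | zero => simp at hlen
    | succ h =>
      have digit_le := monotone_ite_le (Nat.zero_le (2 ^ h)) y hzx.le
      exact add_lt_add_of_le_of_lt digit_le (ih (by simpa using hlen))

end ComparisonSlot

section LastBlock

variable {α : Type*}

/-- The incomplete block, possibly empty, at the end of a list that is cut into consecutive blocks
of `m` entries. -/
def lastBlock (m : ℕ) (l : List α) : List α :=
  l.drop (m * (l.length / m))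

lemma length_lastBlock_lt {m : ℕ} (hm : 0 < m) (l : List α) : (lastBlock m l).length < m := by
  rw [lastBlock, List.length_drop, ← Nat.mod_eq_sub]
  exact Nat.mod_lt _ hm

lemma lastBlock_append {m : ℕ} {p q : List α} (h : (p ++ q).length / m = p.length / m) :
    lastBlock m (p ++ q) = lastBlock m p ++ q := by
  rw [lastBlock, h, List.drop_append_of_le_length (Nat.mul_div_le _ _), lastBlock]

end LastBlock

lemma validAssign_of_lt_imp_snd_lt {k n : ℕ} {σ : Fin n → ℕ} {f : Fin n → ℕ × ℕ}
    (hσ : Function.Injective σ) (hslot : ∀ i, 1 ≤ (f i).2 ∧ (f i).2 ≤ k)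
    (hlt : ∀ i j, (f i).1 = (f j).1 → σ i < σ j → (f i).2 < (f j).2) :
    ValidAssign k σ f := by
  refine ⟨hslot, fun i j hf => ?_, fun i j harray hlt_slot => ?_⟩
  · by_contra hij
    rcases (hσ.ne hij).lt_or_gt with h | h
    · exact (hlt i j (by rw [hf]) h).ne (by rw [hf])
    · exact (hlt j i (by rw [hf]) h).ne (by rw [hf])
  · have hle : σ i ≤ σ j := le_of_not_gt fun h => (hlt j i harray.symm h).asymm hlt_slot
    exact hle.lt_of_ne fun h => hlt_slot.ne (by rw [hσ h])

/-- The online algorithm with blocks of `m` numbers: the last number of a nonempty list goes to the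
array of its block, into the slot given by its comparisons with the earlier numbers of the block.
Arrays are numbered from `0`; the default in `getLastD` only matters for the empty list. -/
def blockAlg (m : ℕ) (l : List ℕ) : ℕ × ℕ :=
  (l.dropLast.length / m, comparisonSlot m (lastBlock m l.dropLast) (l.getLastD 0))

lemma blockAlg_concat (m : ℕ) (p : List ℕ) (x : ℕ) :
    blockAlg m (p ++ [x]) = (p.length / m, comparisonSlot m (lastBlock m p) x) := by
  simp [blockAlg]

section Induced

variable {m n : ℕ}

lemma take_ofFn_add_one {α : Type*} (σ : Fin n → α) (i : Fin n) :
    (List.ofFn σ).take (i + 1) = (List.ofFn σ).take i ++ [σ i] := by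
  simp [List.take_add_one]

lemma exists_take_ofFn_eq_append_cons {α : Type*} (σ : Fin n → α) {i j : Fin n} (hij : i < j) :
    ∃ r, (List.ofFn σ).take j = (List.ofFn σ).take i ++ σ i :: r := by
  have hprefix : (List.ofFn σ).take (i + 1) <+: (List.ofFn σ).take j :=
    List.take_prefix_take_left hij
  obtain ⟨r, hr⟩ := hprefix
  exact ⟨r, by rw [← hr, take_ofFn_add_one, List.append_assoc, List.singleton_append]⟩

lemma inducedAssign_blockAlg (m : ℕ) (σ : Fin n → ℕ) (i : Fin n) :
    inducedAssign (blockAlg m) σ i =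
      (i / m, comparisonSlot m (lastBlock m ((List.ofFn σ).take i)) (σ i)) := by
  rw [inducedAssign, take_ofFn_add_one, blockAlg_concat, List.length_take_of_le (by simp)]

lemma inducedAssign_blockAlg_fst (m : ℕ) (σ : Fin n → ℕ) (i : Fin n) :
    (inducedAssign (blockAlg m) σ i).1 = i / m := by
  rw [inducedAssign_blockAlg]

lemma inducedAssign_blockAlg_snd_mem_Ico (hm : 0 < m) (σ : Fin n → ℕ) (i : Fin n) :
    (inducedAssign (blockAlg m) σ i).2 ∈ Set.Ico 1 (2 ^ m) := by
  rw [inducedAssign_blockAlg]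
  exact ⟨comparisonSlot_pos (length_lastBlock_lt hm _) _, comparisonSlot_lt_two_pow _ _ _⟩

lemma exists_lastBlock_take_ofFn_eq_append_cons {α : Type*} (σ : Fin n → α) {i j : Fin n}
    (hij : i < j) (hblock : (i : ℕ) / m = j / m) :
    ∃ r, lastBlock m ((List.ofFn σ).take j) =
      lastBlock m ((List.ofFn σ).take i) ++ σ i :: r := by
  obtain ⟨r, hr⟩ := exists_take_ofFn_eq_append_cons σ hij
  refine ⟨r, ?_⟩
  rw [hr, lastBlock_append]
  rw [← hr, List.length_take_of_le (by simp), List.length_take_of_le (by simp), hblock]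

lemma inducedAssign_blockAlg_snd_lt_snd (hm : 0 < m) {σ : Fin n → ℕ} {i j : Fin n}
    (hblock : (i : ℕ) / m = j / m) (hσ : σ i < σ j) :
    (inducedAssign (blockAlg m) σ i).2 < (inducedAssign (blockAlg m) σ j).2 := by
  have hij : i ≠ j := ne_of_apply_ne σ hσ.ne
  simp only [inducedAssign_blockAlg]
  rcases hij.lt_or_gt with hij | hji
  · obtain ⟨r, hr⟩ := exists_lastBlock_take_ofFn_eq_append_cons σ hij hblock
    have hlen := length_lastBlock_lt hm ((List.ofFn σ).take j)
    rw [hr] at hlen ⊢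
    exact comparisonSlot_lt_comparisonSlot_append hlen hσ.le
  · obtain ⟨r, hr⟩ := exists_lastBlock_take_ofFn_eq_append_cons σ hji hblock.symm
    rw [hr]
    exact comparisonSlot_append_lt_comparisonSlot (length_lastBlock_lt hm _) hσ

lemma isOnlineBinSorting_blockAlg {k : ℕ} (hm : 0 < m) (hk : 2 ^ m ≤ k + 1) :
    IsOnlineBinSorting k (blockAlg m) := by
  intro n σ hσ
  refine validAssign_of_lt_imp_snd_lt hσ (fun i => ?_) (fun i j harray => ?_)
  · obtain ⟨one_le, lt_two_pow⟩ := inducedAssign_blockAlg_snd_mem_Ico hm σ i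
    exact ⟨one_le, Nat.le_of_lt_succ (lt_two_pow.trans_le hk)⟩
  · simp only [inducedAssign_blockAlg_fst] at harray
    exact inducedAssign_blockAlg_snd_lt_snd hm harray

lemma arraysUsed_inducedAssign_blockAlg_le (hm : 0 < m) (σ : Fin n → ℕ) :
    arraysUsed (inducedAssign (blockAlg m) σ) ≤ n ⌈/⌉ m := by
  have hsub : (Finset.univ.image fun i => (inducedAssign (blockAlg m) σ i).1) ⊆
      Finset.range (n ⌈/⌉ m) := by
    simp only [Finset.image_subset_iff, Finset.mem_range, inducedAssign_blockAlg_fst]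
    intro i _
    exact Nat.div_lt_of_lt_mul (i.isLt.trans_le (le_smul_ceilDiv hm))
  simpa [arraysUsed] using Finset.card_le_card hsub

end Induced

/-- there is a deterministic online algorithm for BinSorting[k] that on every
sequence of `n` distinct natural numbers uses at most `⌈n / ⌊log₂(k+1)⌋⌉` arrays. -/
theorem stmt2 (k : ℕ) (hk : 1 ≤ k) :
    ∃ A : List ℕ → ℕ × ℕ, IsOnlineBinSorting k A ∧
      ∀ (n : ℕ) (σ : Fin n → ℕ), Function.Injective σ →
        arraysUsed (inducedAssign A σ) ≤
          (n + Nat.log 2 (k + 1) - 1) / Nat.log 2 (k + 1) := by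
  have log_pos : 0 < Nat.log 2 (k + 1) := Nat.log_pos one_lt_two (Nat.succ_le_succ hk)
  have two_pow_log_le : 2 ^ Nat.log 2 (k + 1) ≤ k + 1 := Nat.pow_log_le_self 2 k.succ_ne_zero
  exact ⟨blockAlg (Nat.log 2 (k + 1)), isOnlineBinSorting_blockAlg log_pos two_pow_log_le,
    fun n σ _ => (arraysUsed_inducedAssign_blockAlg_le log_pos σ).trans_eq
      (Nat.ceilDiv_eq_add_pred_div n _)⟩
end

section
/- Fix an integer k ≥ 1 and a finite set I of positive integers, and consider the L-shapes {L_i : i ∈ I} from the family 𝓛^k. (a) If |I| ≤ k, then {L_i : i ∈ I} admits a valid packing into one unit bin. (b) Conversely, in every valid packing of {L_i : i ∈ I} into one unit bin one has |I| ≤ k, and for all i < j in I the x-coordinates of the translated reference points satisfy x_i ≥ x_j + 1/(2k); that is, the shapes appear from left to right in strictly descending order of their indices, with horizontal separation at least 1/(2k). -/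
/-- An L-shape, given by its four parameters: arm lengths `lx, ly` and widths `wx, wy`. -/
structure LShape where
  lx : ℝ
  wx : ℝ
  ly : ℝ
  wy : ℝ

/-- The parameter constraints of an L-shape: `0 ≤ wx ≤ lx ≤ 1` and `0 ≤ wy ≤ ly ≤ 1`. -/
def LShape.IsValid (L : LShape) : Prop :=
  0 ≤ L.wx ∧ L.wx ≤ L.lx ∧ L.lx ≤ 1 ∧ 0 ≤ L.wy ∧ L.wy ≤ L.ly ∧ L.ly ≤ 1

/-- The point set `([0,lx]×[0,wy]) ∪ ([0,wx]×[0,ly])` of an L-shape (reference point at the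
origin). -/
def LShape.toSet (L : LShape) : Set (ℝ × ℝ) :=
  Set.Icc ((0, 0) : ℝ × ℝ) (L.lx, L.wy) ∪ Set.Icc ((0, 0) : ℝ × ℝ) (L.wx, L.ly)

/-- The family `𝓛^k`: the L-shape `L_i` has `ℓx = 1/2 + 1/(2k)`, `wx = 1/(2k)`,
`ℓy = 1 − 2^(−i−1)`, `wy = 2^(−i−1)`. -/
noncomputable def Lfam (k i : ℕ) : LShape :=
  ⟨1 / 2 + 1 / (2 * k), 1 / (2 * k), 1 - 1 / 2 ^ (i + 1), 1 / 2 ^ (i + 1)⟩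

/-- A valid packing of the shapes `L i`, `i ∈ I`, translated by `v i`, into one unit bin. -/
def ValidPackingOn (I : Finset ℕ) (L : ℕ → LShape) (v : ℕ → ℝ × ℝ) : Prop :=
  (∀ i ∈ I, planeTranslate (v i) (L i).toSet ⊆ unitBin) ∧
  ∀ i ∈ I, ∀ j ∈ I, i ≠ j →
    Disjoint (interior (planeTranslate (v i) (L i).toSet))
             (interior (planeTranslate (v j) (L j).toSet))

/-!
Write `w` for the width of the vertical arms, `h i ≤ 1/2` for the height of the horizontal arm of
the `i`-th shape and `(x i, y i)` for its reference point. Fitting into the bin forces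
`0 ≤ x i ≤ 1/2 - w` and `0 ≤ y i ≤ h i`. For `i < j` the vertical arms therefore share a height, so
one of the two reference points lies at least `w` to the left of the other. It cannot be that of
`i`: the horizontal arm of `i` would run into the vertical arm of `j`, which starts at height
`y j ≤ h j < h i ≤ y i + h i`. So the intervals `[x i, x i + w]` are non-overlapping in `[0, 1/2]`,
and their number times `w` is at most `1/2`.

Conversely, line the vertical arms up from left to right by descending index and put the `i`-th
shape at height `h i`. For `i < j` the vertical arm of `j` stays to the left of the reference point
of `i`, and its horizontal arm stays below it because `h j + h j ≤ h i`.
-/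

section SeparatedPoints

variable {ι M : Type*} [LinearOrder ι] [AddCommMonoid M] [PartialOrder M] [IsOrderedAddMonoid M]
  {I : Finset ι} {w : M}

lemma card_nsmul_le_of_separated {x : ι → M} {b : M} (hb : 0 ≤ b)
    (hx : ∀ i ∈ I, 0 ≤ x i ∧ x i + w ≤ b)
    (hsep : ∀ i ∈ I, ∀ j ∈ I, i < j → x j + w ≤ x i) : I.card • w ≤ b := by
  induction I using Finset.induction_on_min generalizing b with
  | empty => simpa using hb
  | insert i s hi ih =>
    have hs : s.card • w ≤ x i := by
      refine ih (hx i (s.mem_insert_self i)).1 (fun j hj ↦ ?_) fun j hj l hl ↦ ?_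
      · have hj' := Finset.mem_insert_of_mem (b := i) hj
        exact ⟨(hx j hj').1, hsep i (s.mem_insert_self i) j hj' (hi j hj)⟩
      · exact hsep j (Finset.mem_insert_of_mem hj) l (Finset.mem_insert_of_mem hl)
    calc (insert i s).card • w = s.card • w + w := by
          rw [Finset.card_insert_of_notMem fun his ↦ (hi i his).false, succ_nsmul]
      _ ≤ x i + w := by gcongr
      _ ≤ b := (hx i (s.mem_insert_self i)).2

lemma exists_separated (I : Finset ι) (hw : 0 ≤ w) :
    ∃ x : ι → M, (∀ i ∈ I, 0 ≤ x i ∧ x i + w ≤ I.card • w) ∧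
      ∀ i ∈ I, ∀ j ∈ I, i < j → x j + w ≤ x i := by
  refine ⟨fun i ↦ (I.filter (i < ·)).card • w, fun i hi ↦ ⟨nsmul_nonneg hw _, ?_⟩,
    fun i _ j hj hij ↦ ?_⟩
  · have hss : I.filter (i < ·) ⊂ I := Finset.filter_ssubset.2 ⟨i, hi, lt_irrefl i⟩
    rw [← succ_nsmul]
    exact nsmul_le_nsmul_left hw (Finset.card_lt_card hss)
  · have hss : I.filter (j < ·) ⊂ I.filter (i < ·) :=
      (Finset.ssubset_iff_of_subset (Finset.monotone_filter_right I fun _ _ hjl ↦ hij.trans hjl)).2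
        ⟨j, by simp [hj, hij], by simp⟩
    rw [← succ_nsmul]
    exact nsmul_le_nsmul_left hw (Finset.card_lt_card hss)

end SeparatedPoints

lemma min_le_max_of_disjoint_of_Ioo_prod_subset {α β : Type*} [LinearOrder α] [DenselyOrdered α]
    [LinearOrder β] [DenselyOrdered β] {S T : Set (α × β)} {a b a' b' : α} {c d c' d' : β}
    (hST : Disjoint S T) (hS : Set.Ioo a b ×ˢ Set.Ioo c d ⊆ S)
    (hT : Set.Ioo a' b' ×ˢ Set.Ioo c' d' ⊆ T) (hcd : max c c' < min d d') :
    min b b' ≤ max a a' := by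
  have hdisj := hST.mono hS hT
  rw [Set.disjoint_prod, Set.Ioo_disjoint_Ioo, Set.Ioo_disjoint_Ioo] at hdisj
  exact hdisj.resolve_right hcd.not_ge

namespace LShape

section Translate

variable {L M : LShape} {u v : ℝ × ℝ}

lemma planeTranslate_toSet (L : LShape) (v : ℝ × ℝ) :
    planeTranslate v L.toSet =
      Set.Icc v.1 (v.1 + L.lx) ×ˢ Set.Icc v.2 (v.2 + L.wy) ∪
        Set.Icc v.1 (v.1 + L.wx) ×ˢ Set.Icc v.2 (v.2 + L.ly) := by
  rw [planeTranslate, toSet, Set.image_union, Set.image_add_const_Icc, Set.image_add_const_Icc]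
  simp only [Set.Icc_prod_eq, Prod.fst_add, Prod.snd_add, add_zero, add_comm _ v.1, add_comm _ v.2]

lemma horizontalArm_subset_interior (L : LShape) (v : ℝ × ℝ) :
    Set.Ioo v.1 (v.1 + L.lx) ×ˢ Set.Ioo v.2 (v.2 + L.wy) ⊆
      interior (planeTranslate v L.toSet) := by
  rw [← interior_Icc, ← interior_Icc, ← interior_prod_eq, planeTranslate_toSet]
  exact interior_mono Set.subset_union_left

lemma verticalArm_subset_interior (L : LShape) (v : ℝ × ℝ) :
    Set.Ioo v.1 (v.1 + L.wx) ×ˢ Set.Ioo v.2 (v.2 + L.ly) ⊆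
      interior (planeTranslate v L.toSet) := by
  rw [← interior_Icc, ← interior_Icc, ← interior_prod_eq, planeTranslate_toSet]
  exact interior_mono Set.subset_union_right

lemma interior_subset_Ioi_prod_Ioi (L : LShape) (v : ℝ × ℝ) :
    interior (planeTranslate v L.toSet) ⊆ Set.Ioi v.1 ×ˢ Set.Ioi v.2 := by
  rw [← interior_Ici, ← interior_Ici, ← interior_prod_eq, planeTranslate_toSet]
  exact interior_mono (Set.union_subset (Set.prod_mono Set.Icc_subset_Ici_self
    Set.Icc_subset_Ici_self) (Set.prod_mono Set.Icc_subset_Ici_self Set.Icc_subset_Ici_self))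

lemma disjoint_interior_of_below_left (hx : v.1 + M.wx ≤ u.1) (hy : v.2 + M.wy ≤ u.2) :
    Disjoint (interior (planeTranslate u L.toSet)) (interior (planeTranslate v M.toSet)) := by
  refine Set.disjoint_left.2 fun p hpL hpM ↦ ?_
  obtain ⟨hpx, hpy⟩ := interior_subset_Ioi_prod_Ioi L u hpL
  have hp := interior_subset hpM
  rw [planeTranslate_toSet] at hp
  rcases hp with hhor | hver
  · exact (hhor.2.2.trans hy).not_gt hpy
  · exact (hver.1.2.trans hx).not_gt hpx

lemma planeTranslate_toSet_subset_unitBin_iff (hwx : 0 ≤ L.wx) (hlx : L.wx ≤ L.lx)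
    (hwy : 0 ≤ L.wy) (hly : L.wy ≤ L.ly) :
    planeTranslate v L.toSet ⊆ unitBin ↔
      (0 ≤ v.1 ∧ v.1 + L.lx ≤ 1) ∧ 0 ≤ v.2 ∧ v.2 + L.ly ≤ 1 := by
  have hlx0 : v.1 ≤ v.1 + L.lx := by linarith
  have hly0 : v.2 ≤ v.2 + L.ly := by linarith
  rw [planeTranslate_toSet, unitBin, ← Set.Icc_prod_Icc, Set.union_subset_iff]
  constructor
  · rintro ⟨hhor, hver⟩
    have hright : (v.1 + L.lx, v.2) ∈ _ :=
      hhor ⟨Set.right_mem_Icc.2 hlx0, Set.left_mem_Icc.2 (by linarith)⟩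
    have htop : (v.1, v.2 + L.ly) ∈ _ :=
      hver ⟨Set.left_mem_Icc.2 (by linarith), Set.right_mem_Icc.2 hly0⟩
    exact ⟨⟨htop.1.1, hright.1.2⟩, hright.2.1, htop.2.2⟩
  · rintro ⟨⟨hx0, hx1⟩, hy0, hy1⟩
    exact ⟨Set.prod_mono (Set.Icc_subset_Icc hx0 hx1) (Set.Icc_subset_Icc hy0 (by linarith)),
      Set.prod_mono (Set.Icc_subset_Icc hx0 (by linarith)) (Set.Icc_subset_Icc hy0 hy1)⟩

end Translate

/-- The L-shapes generalizing the family `𝓛^k`: the width `w` of the vertical arm and the height `h`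
of the horizontal arm are free, and the arm lengths are `1/2 + w` and `1 - h`. -/
noncomputable def halfBin (w h : ℝ) : LShape := ⟨1 / 2 + w, w, 1 - h, h⟩

section HalfBin

variable {w h h' : ℝ} {u v : ℝ × ℝ}

lemma halfBin_subset_unitBin_iff (hw : 0 ≤ w) (h0 : 0 ≤ h) (hh : h ≤ 1 / 2) :
    planeTranslate v (halfBin w h).toSet ⊆ unitBin ↔
      (0 ≤ v.1 ∧ v.1 + w ≤ 1 / 2) ∧ 0 ≤ v.2 ∧ v.2 ≤ h := by
  rw [planeTranslate_toSet_subset_unitBin_iff hw (by simp [halfBin]) h0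
    (by simp only [halfBin]; linarith)]
  simp only [halfBin]
  constructor <;> rintro ⟨⟨_, _⟩, _, _⟩ <;> refine ⟨⟨?_, ?_⟩, ?_, ?_⟩ <;> linarith

lemma halfBin_add_le_of_disjoint_interior (hw : 0 < w) (h0' : 0 ≤ h') (hlt : h' < h)
    (hh : h ≤ 1 / 2) (hu : planeTranslate u (halfBin w h).toSet ⊆ unitBin)
    (hv : planeTranslate v (halfBin w h').toSet ⊆ unitBin)
    (hdisj : Disjoint (interior (planeTranslate u (halfBin w h).toSet))
      (interior (planeTranslate v (halfBin w h').toSet))) :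
    v.1 + w ≤ u.1 := by
  obtain ⟨⟨hux, -⟩, huy, huh⟩ := (halfBin_subset_unitBin_iff hw.le (by linarith) hh).1 hu
  obtain ⟨⟨-, hvx⟩, hvy, hvh⟩ := (halfBin_subset_unitBin_iff hw.le h0' (by linarith)).1 hv
  have vertical_vertical : min (u.1 + w) (v.1 + w) ≤ max u.1 v.1 := by
    refine min_le_max_of_disjoint_of_Ioo_prod_subset hdisj
      (verticalArm_subset_interior (halfBin w h) u)
      (verticalArm_subset_interior (halfBin w h') v) ?_
    simp only [halfBin, max_lt_iff, lt_min_iff]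
    refine ⟨⟨?_, ?_⟩, ?_, ?_⟩ <;> linarith
  have horizontal_vertical : min (u.1 + (1 / 2 + w)) (v.1 + w) ≤ max u.1 v.1 := by
    refine min_le_max_of_disjoint_of_Ioo_prod_subset hdisj
      (horizontalArm_subset_interior (halfBin w h) u)
      (verticalArm_subset_interior (halfBin w h') v) ?_
    simp only [halfBin, max_lt_iff, lt_min_iff]
    refine ⟨⟨?_, ?_⟩, ?_, ?_⟩ <;> linarith
  by_contra! hlt_add
  rcases le_total v.1 u.1 with hvu | huv
  · rw [max_eq_left hvu, min_le_iff] at vertical_vertical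
    rcases vertical_vertical with _ | _ <;> linarith
  · rw [max_eq_right huv, min_le_iff] at horizontal_vertical
    rcases horizontal_vertical with _ | _ <;> linarith

end HalfBin

end LShape

open LShape

section Packing

variable {w : ℝ} {h : ℕ → ℝ} {I : Finset ℕ}

lemma ValidPackingOn.add_le_of_lt {v : ℕ → ℝ × ℝ}
    (hv : ValidPackingOn I (fun i ↦ halfBin w (h i)) v) (hw : 0 < w)
    (hh : ∀ i ∈ I, 0 ≤ h i ∧ h i ≤ 1 / 2) (hanti : StrictAntiOn h I) :
    ∀ i ∈ I, ∀ j ∈ I, i < j → (v j).1 + w ≤ (v i).1 := fun i hi j hj hij ↦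
  halfBin_add_le_of_disjoint_interior hw (hh j hj).1 (hanti hi hj hij) (hh i hi).2
    (hv.1 i hi) (hv.1 j hj) (hv.2 i hi j hj hij.ne)

lemma ValidPackingOn.card_mul_le {v : ℕ → ℝ × ℝ}
    (hv : ValidPackingOn I (fun i ↦ halfBin w (h i)) v) (hw : 0 < w)
    (hh : ∀ i ∈ I, 0 ≤ h i ∧ h i ≤ 1 / 2) (hanti : StrictAntiOn h I) :
    I.card * w ≤ 1 / 2 := by
  rw [← nsmul_eq_mul]
  refine card_nsmul_le_of_separated (by norm_num) (fun i hi ↦ ?_) (hv.add_le_of_lt hw hh hanti)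
  exact ((halfBin_subset_unitBin_iff hw.le (hh i hi).1 (hh i hi).2).1 (hv.1 i hi)).1

lemma exists_validPackingOn_halfBin (hw : 0 ≤ w) (hh : ∀ i ∈ I, 0 ≤ h i ∧ h i ≤ 1 / 2)
    (hhalf : ∀ i ∈ I, ∀ j ∈ I, i < j → h j + h j ≤ h i) (hcard : I.card * w ≤ 1 / 2) :
    ∃ v : ℕ → ℝ × ℝ, ValidPackingOn I (fun i ↦ halfBin w (h i)) v := by
  obtain ⟨x, hx, hsep⟩ := exists_separated I hw
  refine ⟨fun i ↦ (x i, h i), fun i hi ↦ ?_, fun i hi j hj hij ↦ ?_⟩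
  · rw [halfBin_subset_unitBin_iff hw (hh i hi).1 (hh i hi).2]
    refine ⟨⟨(hx i hi).1, (hx i hi).2.trans ?_⟩, (hh i hi).1, le_rfl⟩
    rwa [nsmul_eq_mul]
  · rcases hij.lt_or_gt with hlt | hgt
    · exact disjoint_interior_of_below_left (hsep i hi j hj hlt) (hhalf i hi j hj hlt)
    · exact (disjoint_interior_of_below_left (hsep j hj i hi hgt) (hhalf j hj i hi hgt)).symm

theorem stmt3_general (hw : 0 < w) (hh : ∀ i ∈ I, 0 < h i ∧ h i ≤ 1 / 2)
    (hhalf : ∀ i ∈ I, ∀ j ∈ I, i < j → h j + h j ≤ h i) :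
    (I.card * w ≤ 1 / 2 → ∃ v : ℕ → ℝ × ℝ, ValidPackingOn I (fun i ↦ halfBin w (h i)) v) ∧
    (∀ v : ℕ → ℝ × ℝ, ValidPackingOn I (fun i ↦ halfBin w (h i)) v →
      I.card * w ≤ 1 / 2 ∧ ∀ i ∈ I, ∀ j ∈ I, i < j → (v j).1 + w ≤ (v i).1) := by
  have hh' : ∀ i ∈ I, 0 ≤ h i ∧ h i ≤ 1 / 2 := fun i hi ↦ ⟨(hh i hi).1.le, (hh i hi).2⟩
  have hanti : StrictAntiOn h I := fun i hi j hj hij ↦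
    (lt_add_of_pos_left (h j) (hh j hj).1).trans_le (hhalf i hi j hj hij)
  exact ⟨exists_validPackingOn_halfBin hw.le hh' hhalf,
    fun v hv ↦ ⟨hv.card_mul_le hw hh' hanti, hv.add_le_of_lt hw hh' hanti⟩⟩

end Packing

lemma Lfam_eq_halfBin (k : ℕ) :
    Lfam k = fun i ↦ halfBin (1 / (2 * k)) (1 / 2 ^ (i + 1)) := rfl

lemma one_div_two_pow_add_self_le {i j : ℕ} (hij : i < j) :
    (1 : ℝ) / 2 ^ (j + 1) + 1 / 2 ^ (j + 1) ≤ 1 / 2 ^ (i + 1) :=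
  calc (1 : ℝ) / 2 ^ (j + 1) + 1 / 2 ^ (j + 1) = 1 / 2 ^ j := by ring
    _ ≤ 1 / 2 ^ (i + 1) := one_div_pow_le_one_div_pow_of_le one_le_two hij

lemma one_div_two_pow_succ_le_half (i : ℕ) : (1 : ℝ) / 2 ^ (i + 1) ≤ 1 / 2 := by
  simpa using one_div_pow_le_one_div_pow_of_le (one_le_two (α := ℝ)) (Nat.le_add_left 1 i)

lemma natCast_mul_one_div_two_mul_le_half_iff {k : ℕ} (hk : 0 < k) (n : ℕ) :
    (n : ℝ) * (1 / (2 * k)) ≤ 1 / 2 ↔ n ≤ k := by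
  have hk' : (0 : ℝ) < k := Nat.cast_pos.2 hk
  rw [mul_one_div, div_le_div_iff₀ (mul_pos two_pos hk') two_pos, one_mul, mul_comm,
    mul_le_mul_iff_right₀ two_pos, Nat.cast_le]

/-- for `k ≥ 1` and a finite set `I` of positive indices, (a) if `|I| ≤ k` the
shapes `{L_i : i ∈ I} ⊆ 𝓛^k` pack into one unit bin, and (b) in every valid one-bin packing
one has `|I| ≤ k` and for `i < j` the reference points satisfy `x_i ≥ x_j + 1/(2k)`. -/
theorem stmt3 (k : ℕ) (hk : 1 ≤ k) (I : Finset ℕ) (hI : ∀ i ∈ I, 1 ≤ i) :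
    (I.card ≤ k → ∃ v : ℕ → ℝ × ℝ, ValidPackingOn I (Lfam k) v) ∧
    (∀ v : ℕ → ℝ × ℝ, ValidPackingOn I (Lfam k) v →
      I.card ≤ k ∧ ∀ i ∈ I, ∀ j ∈ I, i < j →
        (v j).1 + 1 / (2 * k) ≤ (v i).1) := by
  simpa only [Lfam_eq_halfBin, natCast_mul_one_div_two_mul_le_half_iff hk] using
    stmt3_general (I := I) (by positivity : (0 : ℝ) < 1 / (2 * k))
      (fun i _ ↦ ⟨by positivity, one_div_two_pow_succ_le_half i⟩)
      (fun _ _ _ _ ↦ one_div_two_pow_add_self_le)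
end
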